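/- arXiv:2206.04152 — 6 statements merged into one kernel-verified Lean document; each statement's English description precedes it below -/
import Mathlib

section
/- Let X be a connected, locally compact, locally connected Hausdorff topological space and let C ⊆ X be compact. Then the union of C with all connected components of X \ C that have compact closure is a compact subset of X. -/
/-- First assertion of Theorem 2.4 (ES): in a connected, locally compact, locally connected
Hausdorff space `X`, for any compact `C ⊆ X` the union of `C` with all connected components
of `X \ C` having compact closure is compact. -/
theorem compact_union_bounded_components {X : Type*} [TopologicalSpace X]
    [ConnectedSpace X] [LocallyCompactSpace X] [LocallyConnectedSpace X] [T2Space X]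
    {C : Set X} (hC : IsCompact C) :
    IsCompact (C ∪ {x | x ∈ Cᶜ ∧ IsCompact (closure (connectedComponentIn Cᶜ x))}) := by
  have hCo : IsOpen Cᶜ := hC.isClosed.isOpen_compl
  have hclosed : IsClosed
      (C ∪ {x | x ∈ Cᶜ ∧ IsCompact (closure (connectedComponentIn Cᶜ x))}) := by
    rw [← isOpen_compl_iff, isOpen_iff_mem_nhds]
    intro x hx
    have hxC : x ∈ Cᶜ := fun h => hx (Or.inl h)
    refine Filter.mem_of_superset
      ((hCo.connectedComponentIn (x := x)).mem_nhds (mem_connectedComponentIn hxC)) ?_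
    intro y hy hyS
    rcases hyS with h | h
    · exact connectedComponentIn_subset _ _ hy h
    · refine hx (Or.inr ⟨hxC, ?_⟩)
      rw [connectedComponentIn_eq hy]
      exact h.2
  by_cases hX : CompactSpace X
  · exact hclosed.isCompact
  obtain ⟨K, hK, hCK⟩ := exists_compact_superset hC
  have hF : IsCompact (frontier K) :=
    hK.of_isClosed_subset isClosed_frontier hK.isClosed.frontier_subset
  have hFC : ∀ y ∈ frontier K, y ∈ Cᶜ := fun y hy hyC => hy.2 (hCK hyC)
  obtain ⟨t, htF, htc⟩ := hF.elim_nhds_subcover (fun y => connectedComponentIn Cᶜ y)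
    (fun y hy => (hCo.connectedComponentIn (x := y)).mem_nhds
      (mem_connectedComponentIn (hFC y hy)))
  have hbig : IsCompact (K ∪ ⋃ y ∈ {y | y ∈ t ∧ IsCompact (closure (connectedComponentIn Cᶜ y))},
      closure (connectedComponentIn Cᶜ y)) := by
    refine hK.union (Set.Finite.isCompact_biUnion (t.finite_toSet.subset fun y hy => hy.1) ?_)
    exact fun y hy => hy.2
  refine hbig.of_isClosed_subset hclosed ?_
  rintro x (hx | ⟨hxC, hxb⟩)
  · exact Or.inl (interior_subset (hCK hx))
  by_cases hxK : x ∈ K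
  · exact Or.inl hxK
  have hxU := mem_connectedComponentIn hxC
  by_cases hne : (connectedComponentIn Cᶜ x ∩ frontier K).Nonempty
  · obtain ⟨z, hzU, hzF⟩ := hne
    have hz := htc hzF
    simp only [Set.mem_iUnion] at hz
    obtain ⟨y, hyt, hzy⟩ := hz
    have e : connectedComponentIn Cᶜ x = connectedComponentIn Cᶜ y :=
      (connectedComponentIn_eq hzU).trans (connectedComponentIn_eq hzy).symm
    refine Or.inr (Set.mem_biUnion (x := y) ⟨hyt, e ▸ hxb⟩ (subset_closure ?_))
    rw [← e]
    exact hxU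
  · exfalso
    have hsub : connectedComponentIn Cᶜ x ⊆ Kᶜ := by
      refine isPreconnected_connectedComponentIn.subset_right_of_subset_union
        isOpen_interior hK.isClosed.isOpen_compl
        (Set.disjoint_left.2 fun a ha hb => hb (interior_subset ha)) ?_ ⟨x, hxU, hxK⟩
      intro z hz
      by_cases hzK : z ∈ K
      · by_cases hzi : z ∈ interior K
        · exact Or.inl hzi
        · exact (hne ⟨z, hz, subset_closure hzK, hzi⟩).elim
      · exact Or.inr hzK
    have hcl : IsClosed (connectedComponentIn Cᶜ x) := by
      refine isClosed_of_closure_subset fun z hz => ?_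
      have hzi : z ∈ (interior K)ᶜ := by
        rw [← closure_compl]
        exact closure_mono hsub hz
      have hzC : z ∈ Cᶜ := fun h => hzi (hCK h)
      obtain ⟨w, hwz, hwx⟩ := mem_closure_iff.1 hz _ (hCo.connectedComponentIn (x := z))
        (mem_connectedComponentIn hzC)
      rw [connectedComponentIn_eq hwx, ← connectedComponentIn_eq hwz]
      exact mem_connectedComponentIn hzC
    have huniv := IsClopen.eq_univ ⟨hcl, hCo.connectedComponentIn (x := x)⟩ ⟨x, hxU⟩
    rw [huniv, closure_univ] at hxb
    exact hX ⟨hxb⟩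
end

section
/- Let X be a connected, locally compact, locally connected Hausdorff topological space and let C ⊆ X be compact. Then only finitely many connected components of X \ C fail to have compact closure; that is, the set of connected components of X \ C whose closure is not compact is finite. -/
/-- Second assertion of Theorem 2.4 (ES): in a connected, locally compact, locally connected
Hausdorff space `X`, for any compact `C ⊆ X` only finitely many connected components of
`X \ C` have noncompact closure. -/
theorem finitely_many_unbounded_components {X : Type*} [TopologicalSpace X]
    [ConnectedSpace X] [LocallyCompactSpace X] [LocallyConnectedSpace X] [T2Space X]
    {C : Set X} (hC : IsCompact C) :
    {D : Set X | (∃ x ∈ Cᶜ, D = connectedComponentIn Cᶜ x) ∧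
      ¬ IsCompact (closure D)}.Finite := by
  obtain ⟨K, hK, hCK⟩ := exists_compact_superset hC
  have hF : IsCompact (frontier K) :=
    hK.of_isClosed_subset isClosed_frontier hK.isClosed.frontier_subset
  have hFC : ∀ x ∈ frontier K, x ∈ Cᶜ := fun x hx hxC => hx.2 (hCK hxC)
  have hCo : IsOpen Cᶜ := hC.isClosed.isOpen_compl
  obtain ⟨t, -, ht⟩ := hF.elim_nhds_subcover (fun x => connectedComponentIn Cᶜ x)
    (fun x hx => connectedComponentIn_mem_nhds (hCo.mem_nhds (hFC x hx)))
  refine ((t.finite_toSet.image (fun x => connectedComponentIn Cᶜ x)).union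
    (Set.finite_singleton Set.univ)).subset ?_
  rintro D ⟨⟨x, hx, rfl⟩, hD⟩
  by_cases hm : ∃ y ∈ connectedComponentIn Cᶜ x, y ∈ frontier K
  · left
    obtain ⟨y, hy, hyF⟩ := hm
    obtain ⟨z, hz, hyz⟩ := Set.mem_iUnion₂.1 (ht hyF)
    exact ⟨z, hz, (connectedComponentIn_eq hyz).trans (connectedComponentIn_eq hy).symm⟩
  · right
    push Not at hm
    have hpre : IsPreconnected (connectedComponentIn Cᶜ x) := isPreconnected_connectedComponentIn
    have hsub : connectedComponentIn Cᶜ x ⊆ Kᶜ := by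
      have hcov : connectedComponentIn Cᶜ x ⊆ interior K ∪ Kᶜ := by
        intro y hy
        by_cases hyK : y ∈ K
        · left
          by_contra h
          exact hm y hy ⟨subset_closure hyK, h⟩
        · exact Or.inr hyK
      have hdis : Disjoint (interior K) Kᶜ :=
        Set.disjoint_left.2 fun y hy hy' => hy' (interior_subset hy)
      rcases hpre.subset_or_subset isOpen_interior hK.isClosed.isOpen_compl hdis hcov with h | h
      · exact absurd (hK.of_isClosed_subset isClosed_closure
          (closure_minimal (h.trans interior_subset) hK.isClosed)) hD
      · exact h
    have hcl : closure (connectedComponentIn Cᶜ x) ⊆ Cᶜ := by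
      refine (closure_mono hsub).trans ?_
      rw [closure_compl]
      exact Set.compl_subset_compl.2 hCK
    have hcl2 : closure (connectedComponentIn Cᶜ x) ⊆ connectedComponentIn Cᶜ x :=
      hpre.closure.subset_connectedComponentIn (subset_closure (mem_connectedComponentIn hx)) hcl
    have hclopen : IsClopen (connectedComponentIn Cᶜ x) :=
      ⟨isClosed_of_closure_subset hcl2, hCo.connectedComponentIn⟩
    exact hclopen.eq_univ ⟨x, mem_connectedComponentIn hx⟩
end

section
/- Let X be a connected, locally compact, locally connected Hausdorff topological space and let C ⊆ X be compact. Then there exists a compact set D with C ⊆ D ⊆ X such that every connected component of X \ D has noncompact closure. -/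
theorem exists_compact_superset_all_components_unbounded {X : Type*} [TopologicalSpace X]
    [ConnectedSpace X] [LocallyCompactSpace X] [LocallyConnectedSpace X] [T2Space X]
    {C : Set X} (hC : IsCompact C) :
    ∃ D : Set X, IsCompact D ∧ C ⊆ D ∧
      ∀ x ∈ Dᶜ, ¬ IsCompact (closure (connectedComponentIn Dᶜ x)) := by
  wlog hne : C.Nonempty generalizing C
  · obtain ⟨p⟩ := (inferInstance : Nonempty X)
    obtain ⟨D, h1, h2, h3⟩ := this (C := {p}) isCompact_singleton (Set.singleton_nonempty p)
    rw [Set.not_nonempty_iff_eq_empty] at hne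
    exact ⟨D, h1, by simp [hne], h3⟩
  have hCo : IsOpen Cᶜ := hC.isClosed.isOpen_compl
  have hop : ∀ x, IsOpen (connectedComponentIn Cᶜ x) := fun x => hCo.connectedComponentIn
  set D : Set X := {y | IsCompact (closure (connectedComponentIn Cᶜ y))} with hD
  have hCD : C ⊆ D := by
    intro y hy
    have : connectedComponentIn Cᶜ y = ∅ := connectedComponentIn_eq_empty (by simpa using hy)
    simp [hD, this]
  have hsub : ∀ x ∈ Dᶜ, connectedComponentIn Cᶜ x ⊆ Dᶜ := by
    intro x hx y hy hyD
    apply hx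
    have := connectedComponentIn_eq hy
    simp only [hD, Set.mem_setOf_eq] at hyD ⊢
    rwa [this]
  have hmem : ∀ x ∈ Cᶜ, x ∈ connectedComponentIn Cᶜ x := fun x hx => mem_connectedComponentIn hx
  have hDcl : IsClosed D := by
    rw [← isOpen_compl_iff, isOpen_iff_mem_nhds]
    intro x hx
    exact Filter.mem_of_superset ((hop x).mem_nhds (hmem x fun h => hx (hCD h))) (hsub x hx)
  refine ⟨D, ?_, hCD, ?_⟩
  · obtain ⟨V, hV, hCV⟩ := exists_compact_superset hC
    have hF : IsCompact (frontier (interior V)) :=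
      hV.of_isClosed_subset isClosed_frontier
        (frontier_subset_closure.trans (closure_minimal interior_subset hV.isClosed))
    have hFC : ∀ y ∈ frontier (interior V), y ∈ Cᶜ := by
      intro y hy hyC
      rw [isOpen_interior.frontier_eq] at hy
      exact hy.2 (hCV hyC)
    obtain ⟨t, ht, htc⟩ := hF.elim_nhds_subcover (fun y => connectedComponentIn Cᶜ y)
      (fun y hy => (hop y).mem_nhds (hmem y (hFC y hy)))
    classical
    have hK : IsCompact (V ∪ ⋃ y ∈ t.filter (· ∈ D), closure (connectedComponentIn Cᶜ y)) := by
      refine hV.union ((t.filter (· ∈ D)).isCompact_biUnion ?_)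
      intro y hy
      exact (Finset.mem_filter.1 hy).2
    refine hK.of_isClosed_subset hDcl ?_
    intro x hx
    by_cases hxV : x ∈ V
    · exact Or.inl hxV
    right
    have hxC : x ∈ Cᶜ := fun h => hxV (interior_subset (hCV h))
    -- the closure of the component meets C
    have hmeet : (closure (connectedComponentIn Cᶜ x) ∩ C).Nonempty := by
      by_contra hcon
      have hsubC : closure (connectedComponentIn Cᶜ x) ⊆ Cᶜ := fun z hz hzC => hcon ⟨z, hz, hzC⟩
      have h1 : closure (connectedComponentIn Cᶜ x) ⊆ connectedComponentIn Cᶜ x :=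
        isPreconnected_connectedComponentIn.closure.subset_connectedComponentIn
          (subset_closure (hmem x hxC)) hsubC
      have hcl : IsClopen (connectedComponentIn Cᶜ x) :=
        ⟨closure_subset_iff_isClosed.1 h1, hop x⟩
      have hu := hcl.eq_univ ⟨x, hmem x hxC⟩
      obtain ⟨c, hc⟩ := hne
      exact connectedComponentIn_subset Cᶜ x (hu ▸ Set.mem_univ c) hc
    obtain ⟨c, hc1, hc2⟩ := hmeet
    obtain ⟨z, hz1, hz2⟩ := mem_closure_iff.1 hc1 _ isOpen_interior (hCV hc2)
    obtain ⟨w, hw1, hw2⟩ : (connectedComponentIn Cᶜ x ∩ frontier (interior V)).Nonempty := by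
      by_contra hcon
      have := isPreconnected_connectedComponentIn (F := Cᶜ) (x := x) (interior V)
        (closure (interior V))ᶜ isOpen_interior isClosed_closure.isOpen_compl ?_
        ⟨z, hz2, hz1⟩ ⟨x, hmem x hxC, fun h => hxV (closure_minimal interior_subset hV.isClosed h)⟩
      · obtain ⟨u, -, hu1, hu2⟩ := this
        exact hu2 (subset_closure hu1)
      · intro u hu
        by_contra hn
        simp only [Set.mem_union, Set.mem_compl_iff, not_or, not_not] at hn
        exact hcon ⟨u, hu, by rw [isOpen_interior.frontier_eq]; exact ⟨hn.2, hn.1⟩⟩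
    obtain ⟨y, hy, hwy⟩ := Set.mem_iUnion₂.1 (htc hw2)
    have he : connectedComponentIn Cᶜ x = connectedComponentIn Cᶜ y :=
      (connectedComponentIn_eq hw1).trans (connectedComponentIn_eq hwy).symm
    refine Set.mem_iUnion₂.2 ⟨y, Finset.mem_filter.2 ⟨hy, ?_⟩, ?_⟩
    · simp only [hD, Set.mem_setOf_eq] at hx ⊢
      rwa [← he]
    · rw [← he]
      exact subset_closure (hmem x hxC)
  · intro x hx hcomp
    refine hx (hcomp.of_isClosed_subset isClosed_closure (closure_mono ?_))
    exact isPreconnected_connectedComponentIn.subset_connectedComponentIn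
      (hmem x fun h => hx (hCD h)) (hsub x hx)
end

section
/- Let W and L be types and let deg : W → L → ℕ be any function. Then at least one of the following holds: (i) there exist injective sequences w : ℕ → W and l : ℕ → L such that deg (w j) (l j) ≥ j for every j ∈ ℕ; or (ii) there exist finite sets S ⊆ W and T ⊆ L and a natural number N such that deg x y < N for all x ∈ W \ S and y ∈ L \ T. -/
/-- Abstract content of Lemma 4.10 (Like4.4): for any `deg : W → L → ℕ`, either there are
injective sequences `w : ℕ → W`, `l : ℕ → L` with `deg (w j) (l j) ≥ j` for all `j`, or
there are finite sets `S ⊆ W`, `T ⊆ L` and a bound `N` with `deg x y < N` whenever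
`x ∉ S` and `y ∉ T`. -/
theorem deg_dichotomy {W L : Type*} (deg : W → L → ℕ) :
    (∃ w : ℕ → W, ∃ l : ℕ → L, Function.Injective w ∧ Function.Injective l ∧
      ∀ j : ℕ, j ≤ deg (w j) (l j)) ∨
    (∃ S : Finset W, ∃ T : Finset L, ∃ N : ℕ,
      ∀ x : W, x ∉ S → ∀ y : L, y ∉ T → deg x y < N) := by
  classical
  by_cases h : ∃ S : Finset W, ∃ T : Finset L, ∃ N : ℕ,
      ∀ x : W, x ∉ S → ∀ y : L, y ∉ T → deg x y < N
  · exact Or.inr h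
  left
  push Not at h
  choose f hf g hg hd using h
  let st : ℕ → Finset W × Finset L := fun n => Nat.rec (∅, ∅)
    (fun n p => (insert (f p.1 p.2 n) p.1, insert (g p.1 p.2 n) p.2)) n
  have hs : ∀ n, st (n + 1) = (insert (f (st n).1 (st n).2 n) (st n).1,
      insert (g (st n).1 (st n).2 n) (st n).2) := fun n => rfl
  have hm : Monotone st := by
    refine monotone_nat_of_le_succ fun n => ?_
    rw [hs]
    exact ⟨Finset.subset_insert _ _, Finset.subset_insert _ _⟩
  refine ⟨fun n => f (st n).1 (st n).2 n, fun n => g (st n).1 (st n).2 n, ?_, ?_,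
    fun j => hd _ _ _⟩
  · refine Function.Injective.of_lt_imp_ne fun a b hab he => ?_
    apply hf (st b).1 (st b).2 b
    have h1 : (st (a + 1)).1 ⊆ (st b).1 := (hm hab).1
    apply h1
    rw [hs, ← he]
    exact Finset.mem_insert_self _ _
  · refine Function.Injective.of_lt_imp_ne fun a b hab he => ?_
    apply hg (st b).1 (st b).2 b
    have h1 : (st (a + 1)).2 ⊆ (st b).2 := (hm hab).2
    apply h1
    rw [hs, ← he]
    exact Finset.mem_insert_self _ _
end

section
/- Let H be a group, A and B subgroups of H, and φ : A ≃ B an isomorphism, and let G = HNNExtension H A B φ with canonical map of : H → G and stable letter t (so that t·of(a)·t⁻¹ = of(φ(a)) for all a ∈ A). Then for every h ∈ H, if t · of(h) · t⁻¹ lies in the range of of, then h ∈ A. -/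
open HNNExtension

/-- Consequence of Britton's lemma (algebraic core of Lemma 4.3 (smallmove)): in an HNN
extension `HNNExtension H A B φ`, if `t * of h * t⁻¹` lies in the image of the base group,
then `h ∈ A`. -/
theorem hnn_conj_mem_base_imp_mem {H : Type*} [Group H] (A B : Subgroup H) (φ : A ≃* B)
    (h : H)
    (hmem : t * (of h : HNNExtension H A B φ) * t⁻¹ ∈
      (of : H →* HNNExtension H A B φ).range) :
    h ∈ A := by
  by_contra hA
  have key := HNNExtension.ReducedWord.toList_eq_nil_of_mem_of_range φ
    (⟨1, [(1, h), (-1, 1)], by simp [hA]⟩ : NormalWord.ReducedWord H A B)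
    (by simpa [NormalWord.ReducedWord.prod, mul_assoc] using hmem)
  simp at key
end

section
/- Let Γ be a connected, locally finite, infinite simple graph. Then Γ has exactly one end (its end space is a singleton) if and only if for every finite set K of vertices there exists a finite set K' of vertices with K ⊆ K' such that any two vertices outside K' can be joined by a walk in Γ none of whose vertices lies in K. -/
/-- A simple graph has exactly one end. -/
def IsOneEnded {V : Type*} (Γ : SimpleGraph V) : Prop :=
  Γ.end.Nonempty ∧ Γ.end.Subsingleton

open CategoryTheory in
/-- Every infinite component outside a finite set is the value of some end. -/
theorem exists_end_of_infinite {V : Type*} [Infinite V] (Γ : SimpleGraph V)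
    (hfin : ∀ K : (Finset V)ᵒᵖ, Finite (Γ.componentComplFunctor.obj K))
    (hne : ∀ K : (Finset V)ᵒᵖ, Nonempty (Γ.componentComplFunctor.obj K))
    (K : (Finset V)ᵒᵖ) (C : Γ.componentComplFunctor.obj K)
    (hC : (SimpleGraph.ComponentCompl.supp C).Infinite) :
    ∃ s ∈ Γ.end, s K = C := by
  have hML : Γ.componentComplFunctor.IsMittagLeffler :=
    Γ.componentComplFunctor.isMittagLeffler_of_exists_finite_range
      fun j => ⟨j, 𝟙 j, Set.toFinite _⟩
  have hC' := (Γ.infinite_iff_in_eventualRange C).1 hC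
  have := Γ.componentComplFunctor.toEventualRanges_nonempty hML
  obtain ⟨s, hs⟩ := Γ.componentComplFunctor.toEventualRanges.eval_section_surjective_of_surjective
    (Γ.componentComplFunctor.surjective_toEventualRanges hML) K ⟨C, hC'⟩
  refine ⟨(Γ.componentComplFunctor.toEventualRangesSectionsEquiv s).1,
    (Γ.componentComplFunctor.toEventualRangesSectionsEquiv s).2, ?_⟩
  exact congrArg Subtype.val hs

/-- Characterization of one-endedness for connected, locally finite, infinite graphs:
`Γ` is one-ended iff for every finite vertex set `K` there is a finite `K' ⊇ K` such that
any two vertices outside `K'` can be joined by a walk avoiding `K`. -/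
theorem oneEnded_iff_connectivity_outside {V : Type*} [Infinite V]
    (Γ : SimpleGraph V) (hconn : Γ.Connected)
    (hlf : ∀ v : V, (Γ.neighborSet v).Finite) :
    IsOneEnded Γ ↔
      ∀ K : Set V, K.Finite → ∃ K' : Set V, K'.Finite ∧ K ⊆ K' ∧
        ∀ v ∉ K', ∀ w ∉ K', ∃ p : Γ.Walk v w, ∀ x ∈ p.support, x ∉ K := by
  classical
  have : Γ.LocallyFinite := fun v => (hlf v).fintype
  have : Fact Γ.Preconnected := ⟨hconn.preconnected⟩
  have hfin : ∀ K : (Finset V)ᵒᵖ, Finite (Γ.componentComplFunctor.obj K) :=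
    fun K => Γ.componentCompl_finite K.unop
  have hne : ∀ K : (Finset V)ᵒᵖ, Nonempty (Γ.componentComplFunctor.obj K) :=
    fun K => Γ.componentCompl_nonempty_of_infinite K.unop
  constructor
  · rintro ⟨-, hsub⟩ K hK
    lift K to Finset V using hK
    have : Finite (Γ.ComponentCompl (K : Set V)) := Γ.componentCompl_finite K
    refine ⟨K ∪ ⋃ C ∈ {C : Γ.ComponentCompl (K : Set V) | C.supp.Finite}, C.supp, ?_,
      Set.subset_union_left, ?_⟩
    · exact K.finite_toSet.union ((Set.toFinite _).biUnion fun C hC => hC)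
    · have key : ∀ v, v ∉ (K : Set V) ∪ ⋃ C ∈ {C : Γ.ComponentCompl (K : Set V) | C.supp.Finite},
          C.supp → ∃ h : v ∉ (K : Set V), (Γ.componentComplMk h).supp.Infinite := by
        intro v hv
        have h : v ∉ (K : Set V) := fun h => hv (Or.inl h)
        refine ⟨h, fun hf => hv (Or.inr ?_)⟩
        exact Set.mem_biUnion (x := Γ.componentComplMk h) hf ⟨h, rfl⟩
      intro v hv w hw
      obtain ⟨hv, hvi⟩ := key v hv
      obtain ⟨hw, hwi⟩ := key w hw
      obtain ⟨s, hs, hsv⟩ := exists_end_of_infinite Γ hfin hne (Opposite.op K) _ hvi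
      obtain ⟨t, ht, htw⟩ := exists_end_of_infinite Γ hfin hne (Opposite.op K) _ hwi
      have e : Γ.componentComplMk hv = Γ.componentComplMk hw := by
        rw [← hsv, ← htw, hsub hs ht]
      obtain ⟨p⟩ := SimpleGraph.ConnectedComponent.eq.1 e
      have hp : ∀ x ∈ (p.map (SimpleGraph.Embedding.induce _).toHom).support, x ∉ (K : Set V) := by
        intro x hx
        rw [SimpleGraph.Walk.support_map, List.mem_map] at hx
        obtain ⟨y, -, rfl⟩ := hx
        exact y.2
      exact ⟨p.map (SimpleGraph.Embedding.induce _).toHom, hp⟩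
  · intro h
    refine ⟨nonempty_sections_of_finite_inverse_system Γ.componentComplFunctor, ?_⟩
    intro s hs t ht
    funext K
    obtain ⟨K', hK', hKK', hw⟩ := h (K.unop : Set V) K.unop.finite_toSet
    lift K' to Finset V using hK'
    have hle : K.unop ≤ K' := by exact_mod_cast hKK'
    let f : Opposite.op K' ⟶ K := CategoryTheory.opHomOfLE hle
    obtain ⟨v, hv, hsv⟩ := SimpleGraph.ComponentCompl.exists_eq_mk (s (Opposite.op K'))
    obtain ⟨w, hw', htw⟩ := SimpleGraph.ComponentCompl.exists_eq_mk (t (Opposite.op K'))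
    rw [Γ.end_hom_mk_of_mk hs f hv hsv.symm, Γ.end_hom_mk_of_mk ht f hw' htw.symm]
    obtain ⟨p, hp⟩ := hw v hv w hw'
    exact SimpleGraph.ConnectedComponent.eq.2 ⟨p.induce _ hp⟩
end
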